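/- Let K be a field and let T = node([T_1,…,T_n]) be a finite planar reduced rooted tree of arity n ≥ 2. Then, in the free K-module on PRT' (graftings node extended K-multilinearly): x ⧢ T = x·T + T·x + Σ_{i=1}^{n+1} node([T_1,…,T_{i−1}, x, T_i,…,T_n]) + Σ_{i=1}^{n} node([T_1,…,T_{i−1}, x ⧢ T_i, T_{i+1},…,T_n]). -/

import Mathlib

inductive PTree : Type where
  | node : List PTree → PTree

namespace PTree

/-- the single-vertex tree -/
def x : PTree := node []

/-- the number of leaves of a tree -/
def deg : PTree → ℕ
  | node l => max 1 (l.attach.map fun t => deg t.1).sum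
decreasing_by
  have := List.sizeOf_lt_of_mem t.2
  simp; omega

/-- a tree is reduced if no vertex has arity 1 -/
inductive Reduced : PTree → Prop where
  | node (l : List PTree) (hlen : l.length ≠ 1) (h : ∀ t ∈ l, Reduced t) :
      Reduced (node l)

/-- the reduction of a tree -/
def red : PTree → PTree
  | node [t] => red t
  | node l => node (l.attach.map fun t => red t.1)
decreasing_by
  · simp; omega
  · have := List.sizeOf_lt_of_mem t.2
    simp; omega

mutual
/-- the spanning subtree `T_I` determined by a set `I ⊆ range (deg T)` of leaf positions
(counted from the left, starting at `0`) -/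
def sub : PTree → Finset ℕ → PTree
  | node l, I => node (subList l I)
/-- auxiliary: the list of spanning subtrees of the children, children without
selected leaves being dropped -/
def subList : List PTree → Finset ℕ → List PTree
  | [], _ => []
  | t :: ts, I =>
      (if (I.filter (· < t.deg)).Nonempty then [sub t (I.filter (· < t.deg))] else [])
        ++ subList ts ((I.filter fun j => t.deg ≤ j).image fun j => j - t.deg)
end

/-- the contraction `T|I`: the reduction of the spanning subtree, `1` (i.e. `none`) if `I = ∅` -/
def contract (T : PTree) (I : Finset ℕ) : Option PTree :=
  if I = ∅ then none else some (red (sub T I))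

end PTree

/-- `PRT'`: finite planar rooted trees together with the empty tree `1 = none` -/
abbrev OT := Option PTree

/-- `deg` on `PRT'` -/
def degO (o : OT) : ℕ := o.elim 0 PTree.deg

/-- membership in `PRT'` = reduced trees together with the empty tree `1` -/
def ROT (o : OT) : Prop := ∀ t, o = some t → t.Reduced

/-- contraction on `PRT'` -/
def contractO : OT → Finset ℕ → OT
  | none, _ => none
  | some t, I => PTree.contract t I

open Classical in
/-- `N_{S,T}(V)` as a finite set of subsets of the set of leaf positions of `V` -/
noncomputable def NFinset (S T V : OT) : Finset (Finset ℕ) :=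
  (Finset.range (degO V)).powerset.filter fun I =>
    contractO V I = S ∧ contractO V (Finset.range (degO V) \ I) = T

/-- `#N_{S,T}(V)` -/
noncomputable def Ncount (S T V : OT) : ℕ := (NFinset S T V).card

/-- the free `K`-module on `PRT'` (realized inside the free module on all of `Option PTree`;
the elements of the free module on `PRT'` are those whose support satisfies `ROT`) -/
abbrev AMod (K : Type) [Field K] := OT →₀ K

/-- `f` belongs to the free `K`-module on `PRT'` -/
def suppRed (K : Type) [Field K] (f : AMod K) : Prop := ∀ t ∈ f.support, ROT t

/-- the planar shuffle product `S ⧢ T = Σ_{V ∈ PRT'} #N_{S,T}(V)·V` of two monomials -/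
noncomputable def shuffleM (K : Type) [Field K] (S T : OT) : AMod K :=
  ∑ᶠ (V : OT) (_ : ROT V), Finsupp.single V ((Ncount S T V : K))

/-- the `K`-bilinear extension of the planar shuffle product -/
noncomputable def shuffleF (K : Type) [Field K] (f g : AMod K) : AMod K :=
  f.sum fun S a => g.sum fun T b => (a * b) • shuffleM K S T

/-- tensor-like product of a list of module elements, as a finitely supported
function on lists of basis elements -/
noncomputable def listProd (K : Type) [Field K] {σ : Type} : List (σ →₀ K) → (List σ →₀ K)
  | [] => Finsupp.single [] 1
  | f :: fs => f.sum fun t a => (listProd K fs).sum fun ts b => Finsupp.single (t :: ts) (a * b)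

/-- the `K`-multilinear extension of an operation on basis elements -/
noncomputable def mulExt (K : Type) [Field K] {σ τ : Type} (op : List σ → τ)
    (l : List (σ →₀ K)) : τ →₀ K :=
  (listProd K l).sum fun ts c => Finsupp.single (op ts) c

/-- `gr` : delete all entries equal to `1`, then return `1` if no entry remains,
the unique entry if exactly one remains, and the grafting `node` otherwise -/
def grO (ts : List OT) : OT :=
  match ts.reduceOption with
  | [] => none
  | [t] => some t
  | l => some (PTree.node l)

/-- the `K`-multilinear extension of `gr` -/
noncomputable def grF (K : Type) [Field K] (l : List (AMod K)) : AMod K := mulExt K grO l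

/-- the `K`-multilinear extension of the grafting `node` (junk value `0` on lists
containing the empty tree `1`, which never occurs in its uses here) -/
noncomputable def nodeF (K : Type) [Field K] (l : List (AMod K)) : AMod K :=
  (listProd K l).sum fun ts c =>
    match (ts.mapM (id : Option PTree → Option PTree) : Option (List PTree)) with
    | some l' => Finsupp.single (some (PTree.node l')) c
    | none => 0

/-!
Only single leaves contract to `x`, so the coefficient of `V` in `x ⧢ T` counts the leaves of `V`
whose erasure turns `V` into `T`. Erasing a leaf of `node m` erases it from the forest `m` and
regrafts what is left. As reduction removes vertices of arity one, the result is `node l`, with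
`l` of length at least two, in two cases: the remaining forest is `l`, or it is the single tree
`node l`. For reduced `node m`, the second case means `m = [x, node l]` or `m = [node l, x]`, which
gives the products `x·T` and `T·x`. In the first case, sorting the leaves of `m` by whether they lie
in its first tree gives a recursion for the number of leaves that restore `l`; the coefficients of
the two insertion sums satisfy the same recursion.
-/

theorem mapM_id_eq_some_iff {α : Type*} {l : List (Option α)} {m : List α} :
    l.mapM id = some m ↔ l = m.map some := by
  induction l generalizing m with
  | nil => cases m <;> simp
  | cons a l ih =>
    cases m <;> cases a <;> simp [List.mapM_cons, ih, Option.bind_eq_some_iff, and_comm]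

theorem count_cons_map_toList_append {α : Type*} [DecidableEq α] (s : Multiset (Option α))
    (l m : List α) (a : α) :
    (s.map fun o => o.toList ++ l).count (a :: m)
      = (if l = a :: m then s.count none else 0) + if l = m then s.count (some a) else 0 := by
  induction s using Multiset.induction_on with
  | empty => simp
  | cons o s ih =>
    rw [Multiset.map_cons, Multiset.count_cons, ih]
    cases o with
    | none =>
      simp only [Option.toList_none, List.nil_append, Multiset.count_cons]
      grind
    | some b =>
      simp only [Option.toList_some, List.singleton_append, Multiset.count_cons]
      grind

theorem count_nil_map_toList_append {α : Type*} [DecidableEq α] (s : Multiset (Option α))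
    (l : List α) :
    (s.map fun o => o.toList ++ l).count [] = if l = [] then s.count none else 0 := by
  induction s using Multiset.induction_on with
  | empty => simp
  | cons o s ih =>
    rw [Multiset.map_cons, Multiset.count_cons, ih]
    cases o with
    | none =>
      simp only [Option.toList_none, List.nil_append, Multiset.count_cons]
      grind
    | some b => simp

section ListProd

variable (K : Type) [Field K] {σ : Type}

theorem listProd_cons_apply_nil (f : σ →₀ K) (fs : List (σ →₀ K)) :
    listProd K (f :: fs) [] = 0 := by
  simp [listProd, Finsupp.sum, Finsupp.finsetSum_apply]

theorem listProd_cons_apply_cons (f : σ →₀ K) (fs : List (σ →₀ K)) (a : σ)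
    (m : List σ) : listProd K (f :: fs) (a :: m) = f a * listProd K fs m := by
  classical
  simp only [listProd, Finsupp.sum_apply, Finsupp.single_apply, List.cons.injEq]
  rw [Finsupp.sum_eq_single a, Finsupp.sum_eq_single m]
  · simp
  all_goals simp +contextual [Finsupp.sum]

theorem listProd_map_single_apply [DecidableEq σ] (l m : List σ) :
    listProd K (l.map fun a => Finsupp.single a 1) m = if l = m then 1 else 0 := by
  induction l generalizing m with
  | nil => simp [listProd, Finsupp.single_apply]
  | cons a l ih =>
    cases m with
    | nil => simp [listProd_cons_apply_nil]
    | cons b m => simp [listProd_cons_apply_cons, ih, Finsupp.single_apply, ← ite_and, and_comm]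

end ListProd

namespace PTree

noncomputable instance : DecidableEq PTree := Classical.decEq PTree

@[elab_as_elim, induction_eliminator]
theorem induction {motive : PTree → Prop}
    (node : ∀ l, (∀ t ∈ l, motive t) → motive (node l)) : ∀ t, motive t
  | .node l => node l fun t _ => induction node t

/-- The number of leaves of a planar forest, i.e. of a list of trees. -/
def forestDeg (l : List PTree) : ℕ := (l.map deg).sum

@[simp] theorem forestDeg_nil : forestDeg [] = 0 := rfl

@[simp] theorem forestDeg_cons (t : PTree) (l : List PTree) :
    forestDeg (t :: l) = t.deg + forestDeg l := by
  simp [forestDeg]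

@[simp] theorem forestDeg_append (l m : List PTree) :
    forestDeg (l ++ m) = forestDeg l + forestDeg m := by
  simp [forestDeg]

@[simp] theorem forestDeg_toList (o : OT) : forestDeg o.toList = degO o := by
  cases o <;> simp [degO]

theorem deg_node (l : List PTree) : deg (node l) = max 1 (forestDeg l) := by
  rw [deg, forestDeg, List.attach_map_val]

theorem deg_pos (t : PTree) : 0 < t.deg := by
  induction t with | node l => simp [deg_node]

theorem length_le_forestDeg (l : List PTree) : l.length ≤ forestDeg l := by
  induction l with
  | nil => rfl
  | cons t l ih =>
    have := deg_pos t
    rw [List.length_cons, forestDeg_cons]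
    omega

theorem deg_add_length_le_forestDeg_add_one {t : PTree} {l : List PTree} (ht : t ∈ l) :
    t.deg + l.length ≤ forestDeg l + 1 := by
  induction l with
  | nil => simp at ht
  | cons s l ih =>
    have := deg_pos s
    have := length_le_forestDeg l
    rw [List.length_cons, forestDeg_cons]
    rcases List.mem_cons.1 ht with rfl | ht
    · omega
    · have := ih ht
      omega

theorem deg_node_of_ne_nil {l : List PTree} (h : l ≠ []) : deg (node l) = forestDeg l := by
  have := List.length_pos_iff.2 h
  have := length_le_forestDeg l
  rw [deg_node]
  omega

@[simp] theorem deg_x : deg x = 1 := by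
  simp [x, deg_node]

theorem reduced_node_iff {l : List PTree} :
    (node l).Reduced ↔ l.length ≠ 1 ∧ ∀ t ∈ l, t.Reduced :=
  ⟨fun | .node _ hlen h => ⟨hlen, h⟩, fun h => .node l h.1 h.2⟩

theorem reduced_x : x.Reduced := by
  simp [x, reduced_node_iff]

theorem Reduced.eq_x_of_deg {t : PTree} (ht : t.Reduced) (hdeg : t.deg = 1) : t = x := by
  obtain ⟨l, hlen, -⟩ := ht
  have := length_le_forestDeg l
  rw [deg_node] at hdeg
  rw [List.length_eq_zero_iff.1 (by omega : l.length = 0), x]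

theorem Reduced.deg_eq_one_iff {t : PTree} (ht : t.Reduced) : t.deg = 1 ↔ t = x :=
  ⟨ht.eq_x_of_deg, fun h => h ▸ deg_x⟩

theorem red_singleton (t : PTree) : red (node [t]) = red t := by
  rw [red]

theorem red_node {l : List PTree} (h : l.length ≠ 1) : red (node l) = node (l.map red) := by
  rw [red, List.attach_map_val]
  rintro t rfl
  exact h rfl

theorem reduced_red (t : PTree) : (red t).Reduced := by
  induction t with | node l ih =>
  by_cases h : l.length = 1
  · obtain ⟨t, rfl⟩ := List.length_eq_one_iff.1 h
    simpa [red_singleton] using ih t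
  · simpa [red_node h, reduced_node_iff, h] using ih

theorem Reduced.red_eq {t : PTree} (ht : t.Reduced) : red t = t := by
  induction t with | node l ih =>
  obtain ⟨hlen, hl⟩ := reduced_node_iff.1 ht
  rw [red_node hlen, List.map_congr_left fun t h => ih t h (hl t h), List.map_id']

theorem map_red_eq_self {l : List PTree} (hl : ∀ t ∈ l, t.Reduced) : l.map red = l := by
  rw [List.map_congr_left fun t h => (hl t h).red_eq, List.map_id']

theorem finite_setOf_reduced_deg_le (n : ℕ) : {t : PTree | t.Reduced ∧ t.deg ≤ n}.Finite := by
  induction n with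
  | zero => simp [fun t : PTree => (deg_pos t).ne']
  | succ n ih =>
    have := ih.to_subtype
    refine ((List.finite_length_le {t : PTree | t.Reduced ∧ t.deg ≤ n} (n + 1)).image
      fun l => node (l.map Subtype.val)).subset ?_
    rintro _ ⟨⟨l, hlen, hl⟩, hdeg⟩
    have hforest : forestDeg l ≤ n + 1 := by
      rw [deg_node] at hdeg
      omega
    have hchild : ∀ t ∈ l, t.Reduced ∧ t.deg ≤ n := by
      refine fun t ht => ⟨hl t ht, ?_⟩
      have := List.length_pos_of_mem ht
      have := deg_add_length_le_forestDeg_add_one ht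
      omega
    lift l to List {t : PTree | t.Reduced ∧ t.deg ≤ n} using hchild
    refine ⟨l, ?_, rfl⟩
    have := length_le_forestDeg (l.map Subtype.val)
    rw [List.length_map] at this
    exact this.trans hforest

theorem some_red_node {l : List PTree} (hl : l ≠ []) :
    some (red (node l)) = grO ((l.map red).map some) := by
  match l, hl with
  | [t], _ => simp [red_singleton, grO, List.reduceOption]
  | t :: s :: l, _ => simp [red_node, grO, List.reduceOption]

theorem degO_grO_map_some (l : List PTree) : degO (grO (l.map some)) = forestDeg l := by
  match l with
  | [] => simp [degO, grO, List.reduceOption]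
  | [t] => simp [degO, grO, List.reduceOption]
  | t :: s :: l => simp [degO, grO, List.reduceOption, deg_node_of_ne_nil]

theorem grO_map_some_eq_node_iff {s l : List PTree} (hl : 2 ≤ l.length) :
    grO (s.map some) = some (node l) ↔ s = l ∨ s = [node l] := by
  match l, hl with
  | a :: b :: l, _ =>
    match s with
    | [] | [_] | _ :: _ :: _ => simp [grO, List.reduceOption]

/-- The leaf positions of `I` from `d` on, renumbered from `0`: the selection that `I` induces on
a forest once a first tree of degree `d` is removed. -/
def dropLeaves (d : ℕ) (I : Finset ℕ) : Finset ℕ :=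
  (I.filter fun j => d ≤ j).image fun j => j - d

@[simp] theorem mem_dropLeaves {d j : ℕ} {I : Finset ℕ} : j ∈ dropLeaves d I ↔ d + j ∈ I := by
  simp only [dropLeaves, Finset.mem_image, Finset.mem_filter]
  constructor
  · rintro ⟨i, ⟨hi, hd⟩, rfl⟩
    rwa [Nat.add_sub_cancel' hd]
  · exact fun h => ⟨d + j, by simp [h]⟩

theorem card_filter_lt_add_card_dropLeaves (d : ℕ) (I : Finset ℕ) :
    (I.filter (· < d)).card + (dropLeaves d I).card = I.card := by
  rw [dropLeaves, Finset.card_image_of_injOn]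
  · simpa only [not_lt] using Finset.card_filter_add_card_filter_not (s := I) (· < d)
  · intro a ha b hb hab
    simp only [Finset.mem_coe, Finset.mem_filter] at ha hb hab
    omega

theorem dropLeaves_subset_range {d n : ℕ} {I : Finset ℕ} (hI : I ⊆ Finset.range (d + n)) :
    dropLeaves d I ⊆ Finset.range n := fun j hj => by
  simpa using hI (mem_dropLeaves.1 hj)

theorem filter_lt_subset_range (d : ℕ) (I : Finset ℕ) : I.filter (· < d) ⊆ Finset.range d :=
  fun j hj => by simpa using (Finset.mem_filter.1 hj).2

/-- The contraction of a forest along a set of leaf positions: its trees are contracted along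
the induced selections, and those becoming empty are dropped. -/
def contractForest (l : List PTree) (I : Finset ℕ) : List PTree := (subList l I).map red

@[simp] theorem contractForest_nil (I : Finset ℕ) : contractForest [] I = [] := by
  rw [contractForest, subList, List.map_nil]

theorem contractForest_cons (t : PTree) (l : List PTree) (I : Finset ℕ) :
    contractForest (t :: l) I
      = (contract t (I.filter (· < t.deg))).toList ++ contractForest l (dropLeaves t.deg I) := by
  rw [contractForest, subList, contract, List.map_append]
  by_cases h : I.filter (· < t.deg) = ∅
  · simp [h, contractForest, dropLeaves]
  · simp [h, Finset.nonempty_iff_ne_empty, contractForest, dropLeaves]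

theorem contract_eq_none_iff {t : PTree} {I : Finset ℕ} : contract t I = none ↔ I = ∅ := by
  simp [contract]

theorem contractForest_eq_nil_iff {l : List PTree} {I : Finset ℕ}
    (hI : I ⊆ Finset.range (forestDeg l)) : contractForest l I = [] ↔ I = ∅ := by
  induction l generalizing I with
  | nil => simp_all
  | cons t l ih =>
    rw [contractForest_cons, List.append_eq_nil_iff, Option.toList_eq_nil_iff,
      contract_eq_none_iff, ih (dropLeaves_subset_range (by simpa using hI)),
      ← Finset.card_eq_zero (s := I), ← card_filter_lt_add_card_dropLeaves t.deg I,
      Nat.add_eq_zero_iff, Finset.card_eq_zero, Finset.card_eq_zero]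

theorem contract_node {l : List PTree} {I : Finset ℕ} (hI : I ⊆ Finset.range (forestDeg l)) :
    contract (node l) I = grO ((contractForest l I).map some) := by
  by_cases h : I = ∅
  · simp [(contractForest_eq_nil_iff hI).2 h, contract_eq_none_iff.2 h, grO, List.reduceOption]
  · have hsub : subList l I ≠ [] := by
      simpa [contractForest] using (contractForest_eq_nil_iff hI).not.2 h
    rw [contract, if_neg h, sub, some_red_node hsub, contractForest]

theorem contract_x {I : Finset ℕ} (hI : I ≠ ∅) : contract x I = some x := by
  rw [contract, if_neg hI, x, sub, subList, red_node (by simp), List.map_nil]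

mutual

theorem degO_contract : ∀ (t : PTree) {I : Finset ℕ}, I ⊆ Finset.range t.deg →
    degO (contract t I) = I.card
  | .node [], I, hI => by
    have hI : I ⊆ {0} := by simpa [deg_node] using hI
    rcases Finset.subset_singleton_iff.1 hI with rfl | rfl
    · simp [contract, degO]
    · change degO (contract x {0}) = 1
      simp [contract_x, degO]
  | .node (t :: l), I, hI => by
    rw [deg_node_of_ne_nil (by simp)] at hI
    rw [contract_node hI, degO_grO_map_some, forestDeg_contractForest (t :: l) hI]

theorem forestDeg_contractForest : ∀ (l : List PTree) {I : Finset ℕ},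
    I ⊆ Finset.range (forestDeg l) → forestDeg (contractForest l I) = I.card
  | [], I, hI => by
    rw [forestDeg_nil, Finset.range_zero, Finset.subset_empty] at hI
    simp [hI]
  | t :: l, I, hI => by
    rw [contractForest_cons, forestDeg_append, forestDeg_toList,
      degO_contract t (filter_lt_subset_range t.deg I),
      forestDeg_contractForest l (dropLeaves_subset_range (by simpa using hI)),
      card_filter_lt_add_card_dropLeaves]

end

mutual

theorem contract_range_deg : ∀ t : PTree, contract t (Finset.range t.deg) = some (red t)
  | .node [] => by
    change contract x _ = some (red x)
    rw [contract_x (Finset.nonempty_range_iff.2 (deg_pos _).ne').ne_empty, reduced_x.red_eq]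
  | .node (t :: l) => by
    rw [deg_node_of_ne_nil (by simp), contract_node subset_rfl,
      contractForest_range_forestDeg (t :: l), some_red_node (by simp)]

theorem contractForest_range_forestDeg :
    ∀ l : List PTree, contractForest l (Finset.range (forestDeg l)) = l.map red
  | [] => contractForest_nil _
  | t :: l => by
    have hhead : (Finset.range (forestDeg (t :: l))).filter (· < t.deg) = Finset.range t.deg := by
      ext j
      grind [forestDeg_cons]
    have htail : dropLeaves t.deg (Finset.range (forestDeg (t :: l)))
        = Finset.range (forestDeg l) := by
      ext j
      simp
    rw [contractForest_cons, hhead, htail, contract_range_deg t,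
      contractForest_range_forestDeg l, Option.toList_some, List.map_cons, List.singleton_append]

end

theorem reduced_of_contract_eq_some {t s : PTree} {I : Finset ℕ} (h : contract t I = some s) :
    s.Reduced := by
  rw [contract] at h
  split_ifs at h
  exact Option.some.inj h ▸ reduced_red _

theorem contract_eq_some_x_iff {t : PTree} {I : Finset ℕ} (hI : I ⊆ Finset.range t.deg) :
    contract t I = some x ↔ I.card = 1 := by
  rw [← degO_contract t hI]
  constructor
  · intro h
    simp [h, degO]
  · intro hdeg
    cases h : contract t I with
    | none => simp [h, degO] at hdeg
    | some s => rw [(reduced_of_contract_eq_some h).eq_x_of_deg (by simpa [h, degO] using hdeg)]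

/-- The results of erasing one leaf of `t`, counted with multiplicity. -/
noncomputable def leafErasures (t : PTree) : Multiset OT :=
  (Multiset.range t.deg).map fun p => contract t ((Finset.range t.deg).erase p)

/-- The results of erasing one leaf of the forest `l`, counted with multiplicity. -/
noncomputable def forestErasures (l : List PTree) : Multiset (List PTree) :=
  (Multiset.range (forestDeg l)).map fun p =>
    contractForest l ((Finset.range (forestDeg l)).erase p)

@[simp] theorem leafErasures_x : leafErasures x = {none} := by
  simp [leafErasures, contract]

@[simp] theorem forestErasures_nil : forestErasures [] = 0 := rfl

theorem leafErasures_node {l : List PTree} (hl : l ≠ []) :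
    leafErasures (node l) = (forestErasures l).map fun s => grO (s.map some) := by
  simp only [leafErasures, forestErasures, deg_node_of_ne_nil hl, Multiset.map_map,
    Function.comp_def, contract_node (Finset.erase_subset _ _)]

theorem contractForest_cons_erase_of_lt {t : PTree} {p : ℕ} (hp : p < t.deg) (l : List PTree) :
    contractForest (t :: l) ((Finset.range (forestDeg (t :: l))).erase p)
      = (contract t ((Finset.range t.deg).erase p)).toList ++ l.map red := by
  have hhead : ((Finset.range (forestDeg (t :: l))).erase p).filter (· < t.deg)
      = (Finset.range t.deg).erase p := by
    ext j
    grind [forestDeg_cons]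
  have htail : dropLeaves t.deg ((Finset.range (forestDeg (t :: l))).erase p)
      = Finset.range (forestDeg l) := by
    ext j
    grind [forestDeg_cons, mem_dropLeaves]
  rw [contractForest_cons, hhead, htail, contractForest_range_forestDeg]

theorem contractForest_cons_erase_add (t : PTree) (l : List PTree) (p : ℕ) :
    contractForest (t :: l) ((Finset.range (forestDeg (t :: l))).erase (t.deg + p))
      = red t :: contractForest l ((Finset.range (forestDeg l)).erase p) := by
  have hhead : ((Finset.range (forestDeg (t :: l))).erase (t.deg + p)).filter (· < t.deg)
      = Finset.range t.deg := by
    ext j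
    grind [forestDeg_cons]
  have htail : dropLeaves t.deg ((Finset.range (forestDeg (t :: l))).erase (t.deg + p))
      = (Finset.range (forestDeg l)).erase p := by
    ext j
    simp
  rw [contractForest_cons, hhead, htail, contract_range_deg, Option.toList_some,
    List.singleton_append]

theorem forestErasures_cons (t : PTree) (l : List PTree) :
    forestErasures (t :: l) = (leafErasures t).map (fun o => o.toList ++ l.map red)
      + (forestErasures l).map (red t :: ·) := by
  rw [forestErasures, forestDeg_cons, Multiset.range_add, Multiset.map_add, Multiset.map_map,
    leafErasures, forestErasures, Multiset.map_map, Multiset.map_map, ← forestDeg_cons]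
  congr 1
  · exact Multiset.map_congr rfl fun p hp =>
      contractForest_cons_erase_of_lt (Multiset.mem_range.1 hp) l
  · exact Multiset.map_congr rfl fun p _ => contractForest_cons_erase_add t l p

theorem count_none_leafErasures (t : PTree) :
    (leafErasures t).count none = if t.deg = 1 then 1 else 0 := by
  split_ifs with h
  · simp [leafErasures, h, contract]
  · simp only [leafErasures, Multiset.count_eq_zero, Multiset.mem_map, Multiset.mem_range,
      not_exists, not_and]
    intro p hp
    rw [contract_eq_none_iff, ← Finset.card_eq_zero,
      Finset.card_erase_of_mem (Finset.mem_range.2 hp), Finset.card_range]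
    omega

theorem count_nil_forestErasures_cons {t : PTree} {l : List PTree} (ht : t.Reduced)
    (hl : ∀ u ∈ l, u.Reduced) :
    (forestErasures (t :: l)).count [] = if t = x ∧ l = [] then 1 else 0 := by
  rw [forestErasures_cons, map_red_eq_self hl, Multiset.count_add, count_nil_map_toList_append,
    count_none_leafErasures, Multiset.count_eq_zero_of_notMem (by simp)]
  simp only [ht.deg_eq_one_iff, add_zero, ← ite_and, and_comm]

theorem count_cons_forestErasures_cons {t t' : PTree} {l l' : List PTree} (ht : t.Reduced)
    (hl : ∀ u ∈ l, u.Reduced) :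
    (forestErasures (t :: l)).count (t' :: l') = (if t = x ∧ l = t' :: l' then 1 else 0)
      + (if l = l' then (leafErasures t).count (some t') else 0)
      + if t = t' then (forestErasures l).count l' else 0 := by
  have hcons : ((forestErasures l).map (t :: ·)).count (t' :: l')
      = if t = t' then (forestErasures l).count l' else 0 := by
    split_ifs with h
    · rw [h, Multiset.count_map_eq_count' _ _ (List.cons_injective)]
    · simp [h]
  rw [forestErasures_cons, map_red_eq_self hl, ht.red_eq, Multiset.count_add, hcons,
    count_cons_map_toList_append, count_none_leafErasures]
  simp only [ht.deg_eq_one_iff, ← ite_and, and_comm]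

theorem count_singleton_forestErasures {m : List PTree} (hm : (node m).Reduced) (t : PTree) :
    (forestErasures m).count [t] = (if m = [x, t] then 1 else 0) + if m = [t, x] then 1 else 0 := by
  obtain ⟨hlen, hred⟩ := reduced_node_iff.1 hm
  match m with
  | [] => simp
  | [u] => simp at hlen
  | u :: v :: r =>
    simp only [List.forall_mem_cons] at hred
    rw [count_cons_forestErasures_cons hred.1 (by simpa using hred.2),
      count_nil_forestErasures_cons hred.2.1 hred.2.2]
    simp [← ite_and]

theorem count_forestErasures_singleton {t : PTree} (ht : t.Reduced) {l : List PTree}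
    (hl : 2 ≤ l.length) : (forestErasures [t]).count l = 0 := by
  match l, hl with
  | a :: b :: l, _ => simp [count_cons_forestErasures_cons ht]

theorem count_node_leafErasures_node {l m : List PTree} (hl : 2 ≤ l.length) :
    (leafErasures (node m)).count (some (node l))
      = (forestErasures m).count l + (forestErasures m).count [node l] := by
  rcases eq_or_ne m [] with rfl | hm
  · simp [← x.eq_def]
  have hne : l ≠ [node l] := by
    intro h
    rw [h] at hl
    exact absurd hl (by simp)
  rw [leafErasures_node hm]
  induction forestErasures m using Multiset.induction_on with
  | empty => simp
  | cons s E ih =>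
    simp only [Multiset.map_cons, Multiset.count_cons, ih, eq_comm (a := some (node l)),
      grO_map_some_eq_node_iff hl]
    grind

theorem mem_NFinset {S T V : OT} {I : Finset ℕ} : I ∈ NFinset S T V ↔
    I ⊆ Finset.range (degO V) ∧ contractO V I = S ∧
      contractO V (Finset.range (degO V) \ I) = T := by
  rw [NFinset, Finset.mem_filter, Finset.mem_powerset]

theorem Ncount_x_some (T : OT) (V : PTree) :
    Ncount (some x) T (some V) = (leafErasures V).count T := by
  have hN : NFinset (some x) T (some V)
      = ((Finset.range V.deg).filter fun p =>
          contract V ((Finset.range V.deg).erase p) = T).image fun p => {p} := by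
    ext I
    simp only [mem_NFinset, contractO, degO, Option.elim_some, Finset.mem_filter,
      Finset.mem_image, Finset.mem_range]
    constructor
    · rintro ⟨hI, hx, hT⟩
      obtain ⟨p, rfl⟩ := Finset.card_eq_one.1 ((contract_eq_some_x_iff hI).1 hx)
      exact ⟨p, ⟨by simpa using hI, by rwa [Finset.erase_eq]⟩, rfl⟩
    · rintro ⟨p, ⟨hp, hT⟩, rfl⟩
      have hI : {p} ⊆ Finset.range V.deg := by simpa using hp
      exact ⟨hI, (contract_eq_some_x_iff hI).2 rfl, by rwa [← Finset.erase_eq]⟩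
  rw [Ncount, hN, Finset.card_image_of_injective _ Finset.singleton_injective, leafErasures,
    Multiset.count_map]
  simp only [eq_comm (a := T)]
  rfl

theorem Ncount_x_none (T : OT) : Ncount (some x) T none = 0 := by
  simp [Ncount, NFinset, contractO]

theorem degO_contractO {V : OT} {I : Finset ℕ} (hI : I ⊆ Finset.range (degO V)) :
    degO (contractO V I) = I.card := by
  cases V with
  | none => simp_all [degO, contractO]
  | some V => exact degO_contract V hI

theorem degO_eq_add_of_Ncount_ne_zero {S T V : OT} (h : Ncount S T V ≠ 0) :
    degO V = degO S + degO T := by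
  obtain ⟨I, hI⟩ := Finset.card_ne_zero.1 h
  obtain ⟨hIV, rfl, rfl⟩ := mem_NFinset.1 hI
  have hcard := Finset.card_sdiff_add_card_eq_card hIV
  rw [Finset.card_range] at hcard
  rw [degO_contractO hIV, degO_contractO Finset.sdiff_subset, add_comm, hcard]

theorem finite_setOf_ROT_Ncount_ne_zero (S T : OT) :
    {V : OT | ROT V ∧ Ncount S T V ≠ 0}.Finite := by
  refine ((finite_setOf_reduced_deg_le (degO S + degO T)).image some |>.insert none).subset ?_
  rintro (_ | V) ⟨hV, hN⟩
  · simp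
  · exact Or.inr ⟨V, ⟨hV V rfl, (degO_eq_add_of_Ncount_ne_zero hN).le⟩, rfl⟩

theorem ROT_some_iff {t : PTree} : ROT (some t) ↔ t.Reduced := by
  simp [ROT]

open Classical in
theorem shuffleM_apply (K : Type) [Field K] (S T V : OT) :
    shuffleM K S T V = if ROT V then (Ncount S T V : K) else 0 := by
  have hterm (W : OT) : ∑ᶠ _ : ROT W, Finsupp.single W (Ncount S T W : K)
      = Finsupp.single W (if ROT W then (Ncount S T W : K) else 0) := by
    rw [finsum_eq_if]
    split_ifs <;> simp
  have hfin : (Function.support fun W : OT =>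
      Finsupp.single W (if ROT W then (Ncount S T W : K) else 0)).Finite := by
    refine (finite_setOf_ROT_Ncount_ne_zero S T).subset fun W hW => ?_
    by_contra h
    simp_all
  rw [shuffleM, finsum_congr hterm, ← Finsupp.applyAddHom_apply, AddMonoidHom.map_finsum _ hfin,
    finsum_eq_single _ V fun W hW => by simp [hW]]
  simp

section Coefficients

variable (K : Type) [Field K]

theorem nodeF_apply_none (fs : List (AMod K)) : nodeF K fs none = 0 := by
  rw [nodeF, Finsupp.sum_apply]
  refine Finset.sum_eq_zero fun ts _ => ?_
  dsimp only
  split <;> simp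

theorem nodeF_apply_node (fs : List (AMod K)) (m : List PTree) :
    nodeF K fs (some (node m)) = listProd K fs (m.map some) := by
  rw [nodeF, Finsupp.sum_apply, Finsupp.sum_eq_single (m.map some)]
  · simp [mapM_id_eq_some_iff.2 rfl]
  · intro ts _ hts
    split
    case h_1 l hl =>
      have hlm : l ≠ m := by
        rintro rfl
        exact hts (mapM_id_eq_some_iff.1 hl)
      simp [hlm]
    case h_2 => rfl
  · simp [mapM_id_eq_some_iff.2 rfl]

/-- The shuffle of `x` into the forest `l`: the leaf `x` either becomes a new tree of the forest
or is shuffled into one of its trees. -/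
noncomputable def forestShuffle (l : List PTree) : List OT →₀ K :=
  ∑ i ∈ Finset.range (l.length + 1), Finsupp.single ((l.insertIdx i x).map some) 1
    + ∑ i ∈ Finset.range l.length, listProd K (l.mapIdx fun j t =>
        if j = i then shuffleM K (some x) (some t) else Finsupp.single (some t) 1)

theorem forestShuffle_nil : forestShuffle K [] = Finsupp.single [some x] 1 := by
  simp [forestShuffle]

theorem forestShuffle_cons (t : PTree) (l : List PTree) :
    forestShuffle K (t :: l) = Finsupp.single ((x :: t :: l).map some) 1
      + listProd K (shuffleM K (some x) (some t) :: (l.map some).map (Finsupp.single · 1))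
      + (forestShuffle K l).mapDomain (some t :: ·) := by
  have hprod (fs : List (AMod K)) :
      listProd K (Finsupp.single (some t) 1 :: fs) = (listProd K fs).mapDomain (some t :: ·) := by
    rw [listProd, Finsupp.sum_single_index (by simp)]
    simp only [one_mul, Finsupp.mapDomain]
  have hmap : (l.mapIdx fun j s => if j + 1 = 0 then shuffleM K (some x) (some s)
      else Finsupp.single (some s) 1) = (l.map some).map (Finsupp.single · 1) := by
    apply List.ext_getElem <;> simp
  simp only [forestShuffle, List.length_cons, Finset.sum_range_succ' _ (_ + 1),
    Finset.sum_range_succ' _ l.length, Finsupp.mapDomain_add, Finsupp.mapDomain_finsetSum,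
    List.mapIdx_cons, hmap, if_true, Nat.add_right_cancel_iff, Nat.zero_ne_add_one, if_false,
    hprod, List.insertIdx_succ_cons, List.insertIdx_zero, List.map_cons, Finsupp.mapDomain_single]
  abel

theorem forestShuffle_apply_nil (l : List PTree) : forestShuffle K l [] = 0 := by
  cases l <;> simp [forestShuffle, listProd_cons_apply_nil, Finset.sum_range_succ']

theorem forestShuffle_cons_apply_cons (t t' : PTree) (l m : List PTree) :
    forestShuffle K (t' :: l) ((t :: m).map some) = (if t = x ∧ m = t' :: l then 1 else 0)
      + (if m = l then shuffleM K (some x) (some t') (some t) else 0)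
      + if t = t' then forestShuffle K l (m.map some) else 0 := by
  have htail : (forestShuffle K l).mapDomain (some t' :: ·) (some t :: m.map some)
      = if t = t' then forestShuffle K l (m.map some) else 0 := by
    split_ifs with h
    · rw [h, Finsupp.mapDomain_apply List.cons_injective]
    · exact Finsupp.mapDomain_of_notMem_range _ _ (by simpa using Ne.symm h)
  have hsome := List.map_injective_iff.2 (Option.some_injective PTree)
  rw [forestShuffle_cons, Finsupp.add_apply, Finsupp.add_apply, List.map_cons (l := m), htail,
    listProd_cons_apply_cons, listProd_map_single_apply, Finsupp.single_apply, ← List.map_cons]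
  simp only [hsome.eq_iff, List.cons.injEq, mul_ite, mul_one, mul_zero,
    eq_comm (a := x), eq_comm (a := t' :: l), eq_comm (a := l)]

open Classical in
theorem forestShuffle_apply {l : List PTree} (hl : ∀ t ∈ l, t.Reduced) (m : List PTree) :
    forestShuffle K l (m.map some)
      = if ∀ t ∈ m, t.Reduced then ((forestErasures m).count l : K) else 0 := by
  induction l generalizing m with
  | nil =>
    rcases m with _ | ⟨t, m⟩
    · simp [forestShuffle_nil]
    rw [forestShuffle_nil, Finsupp.single_apply]
    by_cases hred : ∀ u ∈ t :: m, u.Reduced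
    · obtain ⟨ht, hm⟩ := List.forall_mem_cons.1 hred
      rw [if_pos hred, count_nil_forestErasures_cons ht hm]
      simp [eq_comm (a := x), eq_comm (a := [])]
    · have hx : [some x] ≠ (t :: m).map some := by
        intro h
        simp only [List.map_cons, List.cons.injEq, Option.some.injEq, List.nil_eq,
          List.map_eq_nil_iff] at h
        obtain ⟨rfl, rfl⟩ := h
        exact hred (by simp [reduced_x])
      rw [if_neg hx, if_neg hred]
  | cons t' l ih =>
    rcases m with _ | ⟨t, m⟩
    · simp [forestShuffle_apply_nil]
    simp only [List.forall_mem_cons] at hl ⊢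
    rw [forestShuffle_cons_apply_cons, shuffleM_apply, ih hl.2, Ncount_x_some, ROT_some_iff]
    by_cases hred : t.Reduced ∧ ∀ u ∈ m, u.Reduced
    · rw [if_pos hred.1, if_pos hred.2, if_pos hred, count_cons_forestErasures_cons hred.1 hred.2]
      push_cast
      rfl
    · rw [if_neg hred]
      grind [reduced_x]

end Coefficients

theorem shuffleM_x_node_apply_node (K : Type) [Field K] {l : List PTree} (hlen : 2 ≤ l.length)
    (hl : (node l).Reduced) (m : List PTree) :
    shuffleM K (some x) (some (node l)) (some (node m))
      = (if m = [x, node l] then 1 else 0) + (if m = [node l, x] then 1 else 0)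
        + forestShuffle K l (m.map some) := by
  classical
  rw [shuffleM_apply, ROT_some_iff, Ncount_x_some, count_node_leafErasures_node hlen,
    forestShuffle_apply K (reduced_node_iff.1 hl).2]
  by_cases hm : (node m).Reduced
  · rw [if_pos hm, if_pos (reduced_node_iff.1 hm).2, count_singleton_forestErasures hm]
    push_cast
    ring
  · have hleft : m ≠ [x, node l] := by
      rintro rfl
      exact hm (reduced_node_iff.2 ⟨by simp, by simp [reduced_x, hl]⟩)
    have hright : m ≠ [node l, x] := by
      rintro rfl
      exact hm (reduced_node_iff.2 ⟨by simp, by simp [reduced_x, hl]⟩)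
    have hcount : (∀ t ∈ m, t.Reduced) → (forestErasures m).count l = 0 := by
      intro hred
      have hlen_m : m.length = 1 := by
        by_contra h
        exact hm (reduced_node_iff.2 ⟨h, hred⟩)
      obtain ⟨t, rfl⟩ := List.length_eq_one_iff.1 hlen_m
      exact count_forestErasures_singleton (hred t (by simp)) hlen
    rw [if_neg hm, if_neg hleft, if_neg hright, zero_add, zero_add]
    split_ifs with hred
    · rw [hcount hred, Nat.cast_zero]
    · rfl

end PTree

open PTree

/-- For a finite planar reduced rooted tree `T = node [T_1,…,T_n]` of arity
`n ≥ 2`:  `x ⧢ T = x·T + T·x + Σ_{i=1}^{n+1} node [T_1,…,T_{i−1}, x, T_i,…,T_n]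
+ Σ_{i=1}^{n} node [T_1,…,T_{i−1}, x ⧢ T_i, T_{i+1},…,T_n]`. -/
theorem shuffle_x_tree (K : Type) [Field K] (lt : List PTree) (hn : 2 ≤ lt.length)
    (hT : (PTree.node lt).Reduced) :
    shuffleM K (some PTree.x) (some (PTree.node lt))
      = Finsupp.single (some (PTree.node [PTree.x, PTree.node lt])) 1
        + Finsupp.single (some (PTree.node [PTree.node lt, PTree.x])) 1
        + ∑ i ∈ Finset.range (lt.length + 1),
            Finsupp.single (some (PTree.node (lt.insertIdx i PTree.x))) 1
        + ∑ i ∈ Finset.range lt.length,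
            nodeF K (lt.mapIdx fun j t =>
              if j = i then shuffleM K (some PTree.x) (some t)
              else Finsupp.single (some t) 1) := by
  ext V
  rcases V with _ | ⟨⟨m⟩⟩
  · simp [shuffleM_apply, Ncount_x_none, nodeF_apply_none]
  · rw [shuffleM_x_node_apply_node K hn hT]
    have hsome := List.map_injective_iff.2 (Option.some_injective PTree)
    simp only [forestShuffle, Finsupp.add_apply, Finsupp.finsetSum_apply, nodeF_apply_node,
      Finsupp.single_apply, Option.some.injEq, node.injEq, hsome.eq_iff, add_assoc,
      eq_comm (a := m)]
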